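/- arXiv:2410.09697 — 7 statements merged into one kernel-verified Lean document; each statement's English description precedes it below -/
import Mathlib

section
/- Let ν and π be probability densities on ℝ^d that are mutually absolutely continuous, with KL(ν,π) < ∞ and KL(π,ν) < ∞, and let λ ∈ [0,1]. Let μ_λ(x) = c_λ ν(x)^{1−λ} π(x)^λ with c_λ = (∫ ν^{1−λ} π^λ dx)^{−1}. Then KL(ν, μ_λ) ≤ λ·( KL(ν,π) + KL(π,ν) ). -/
open MeasureTheory Real

lemma aux_KL_nonneg {α : Type*} [MeasurableSpace α] {m : Measure α} (f g : α → ℝ)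
    (hf : ∀ x, 0 ≤ f x) (hg : ∀ x, 0 ≤ g x) (hfi : Integrable f m) (hgi : Integrable g m)
    (hf1 : ∫ x, f x ∂m = 1) (hg1 : ∫ x, g x ∂m = 1) (hac : ∀ x, f x = 0 ↔ g x = 0)
    (hi : Integrable (fun x => f x * Real.log (f x / g x)) m) :
    0 ≤ ∫ x, f x * Real.log (f x / g x) ∂m := by
  have h1 : ∫ x, (f x - g x) ∂m = 0 := by
    rw [integral_sub hfi hgi, hf1, hg1, sub_self]
  rw [← h1]
  refine integral_mono (hfi.sub hgi) hi fun x => ?_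
  show f x - g x ≤ f x * Real.log (f x / g x)
  by_cases h : f x = 0
  · have h' := (hac x).1 h
    simp [h, h']
  · have h' : g x ≠ 0 := fun h' => h ((hac x).2 h')
    have hfp : 0 < f x := lt_of_le_of_ne (hf x) (Ne.symm h)
    have hgp : 0 < g x := lt_of_le_of_ne (hg x) (Ne.symm h')
    have h2 := Real.one_sub_inv_le_log_of_pos (div_pos hfp hgp)
    have h3 := mul_le_mul_of_nonneg_left h2 hfp.le
    have h4 : f x * (1 - (f x / g x)⁻¹) = f x - g x := by field_simp
    linarith

/-- For mutually absolutely continuous probability densities ν, π on ℝ^d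
with finite KL divergences in both directions, and λ ∈ [0,1], with
μ_λ = c_λ ν^{1−λ} π^λ the geometric tempering (c_λ the normalizing constant),
we have KL(ν, μ_λ) ≤ λ·(KL(ν,π) + KL(π,ν)). -/
theorem KL_nu_geometric_tempering_le
    (d : ℕ) (nu pd : (Fin d → ℝ) → ℝ)
    (hnu_meas : Measurable nu) (hpd_meas : Measurable pd)
    (hnu_nonneg : ∀ x, 0 ≤ nu x) (hpd_nonneg : ∀ x, 0 ≤ pd x)
    (hnu_int : Integrable nu) (hpd_int : Integrable pd)
    (hnu_one : ∫ x, nu x = 1) (hpd_one : ∫ x, pd x = 1)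
    (hac : ∀ x, nu x = 0 ↔ pd x = 0)
    (hKLnp : Integrable (fun x => nu x * Real.log (nu x / pd x)))
    (hKLpn : Integrable (fun x => pd x * Real.log (pd x / nu x)))
    (lam : ℝ) (hlam : lam ∈ Set.Icc (0 : ℝ) 1) :
    (∫ x, nu x * Real.log (nu x /
        ((nu x) ^ (1 - lam) * (pd x) ^ lam / ∫ y, (nu y) ^ (1 - lam) * (pd y) ^ lam)))
      ≤ lam * ((∫ x, nu x * Real.log (nu x / pd x))
                + ∫ x, pd x * Real.log (pd x / nu x)) := by
  obtain ⟨h0, h1⟩ := hlam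
  have hA := aux_KL_nonneg nu pd hnu_nonneg hpd_nonneg hnu_int hpd_int hnu_one hpd_one hac hKLnp
  have hB := aux_KL_nonneg pd nu hpd_nonneg hnu_nonneg hpd_int hnu_int hpd_one hnu_one
    (fun x => (hac x).symm) hKLpn
  have hZ0 : 0 ≤ ∫ y, (nu y) ^ (1 - lam) * (pd y) ^ lam :=
    integral_nonneg fun y =>
      mul_nonneg (Real.rpow_nonneg (hnu_nonneg y) _) (Real.rpow_nonneg (hpd_nonneg y) _)
  have hZ1 : ∫ y, (nu y) ^ (1 - lam) * (pd y) ^ lam ≤ 1 := by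
    have e : ∫ y, ((1 - lam) * nu y + lam * pd y) = 1 := by
      rw [integral_add (hnu_int.const_mul _) (hpd_int.const_mul _), integral_const_mul,
        integral_const_mul, hnu_one, hpd_one]
      ring
    refine le_trans ?_ e.le
    refine integral_mono_of_nonneg (Filter.Eventually.of_forall fun y =>
      mul_nonneg (Real.rpow_nonneg (hnu_nonneg y) _) (Real.rpow_nonneg (hpd_nonneg y) _))
      ((hnu_int.const_mul _).add (hpd_int.const_mul _)) (Filter.Eventually.of_forall fun y => ?_)
    exact Real.geom_mean_le_arith_mean2_weighted (by linarith) h0 (hnu_nonneg y) (hpd_nonneg y)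
      (by ring)
  generalize (∫ y, (nu y) ^ (1 - lam) * (pd y) ^ lam) = Z at hZ0 hZ1 ⊢
  rcases hZ0.eq_or_lt with hZ | hZ
  · subst hZ
    simp only [div_zero, Real.log_zero, mul_zero, integral_zero]
    positivity
  · have key : ∀ x, nu x * Real.log (nu x / ((nu x) ^ (1 - lam) * (pd x) ^ lam / Z))
        = lam * (nu x * Real.log (nu x / pd x)) + nu x * Real.log Z := by
      intro x
      by_cases h : nu x = 0
      · simp [h]
      · have h' : pd x ≠ 0 := fun h' => h ((hac x).2 h')
        have hn : 0 < nu x := lt_of_le_of_ne (hnu_nonneg x) (Ne.symm h)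
        have hp : 0 < pd x := lt_of_le_of_ne (hpd_nonneg x) (Ne.symm h')
        have hn' := Real.rpow_pos_of_pos hn (1 - lam)
        have hp' := Real.rpow_pos_of_pos hp lam
        rw [Real.log_div h (by positivity), Real.log_div (by positivity) hZ.ne',
          Real.log_mul hn'.ne' hp'.ne', Real.log_rpow hn, Real.log_rpow hp, Real.log_div h h']
        ring
    simp_rw [key]
    rw [integral_add (hKLnp.const_mul _) (hnu_int.mul_const _), integral_const_mul,
      integral_mul_const, hnu_one]
    have := Real.log_nonpos hZ.le hZ1
    have := mul_nonneg h0 hB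
    linarith
end

section
/- Let V : ℝ^d → ℝ be differentiable with L-Lipschitz gradient (L > 0), and suppose V is dissipative: ⟨∇V(x), x⟩ ≥ a‖x‖² − b for all x ∈ ℝ^d, with constants a, b > 0. Then V attains its infimum, and for every x ∈ ℝ^d, V(x) − inf_{y ∈ ℝ^d} V(y) ≤ 2L( ‖x‖² + b/a ). -/
open MeasureTheory Real RealInnerProductSpace

theorem grad_mvt {d : ℕ} (V : EuclideanSpace ℝ (Fin d) → ℝ) (hdiff : Differentiable ℝ V)
    (x h : EuclideanSpace ℝ (Fin d)) :
    ∃ t : ℝ, 0 < t ∧ t < 1 ∧ V (x + h) - V x = ⟪gradient V (x + t • h), h⟫ := by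
  have hd : ∀ t : ℝ, HasDerivAt (fun t : ℝ => V (x + t • h)) ⟪gradient V (x + t • h), h⟫ t := by
    intro t
    have h1 : HasDerivAt (fun t : ℝ => x + t • h) h t := by
      simpa using ((hasDerivAt_id t).smul_const h).const_add x
    have h2 := (hdiff (x + t • h)).hasGradientAt.hasFDerivAt
    exact h2.comp_hasDerivAt t h1
  obtain ⟨t, ht, he⟩ := exists_hasDerivAt_eq_slope (fun t : ℝ => V (x + t • h)) _ zero_lt_one
    (fun t _ => (hd t).continuousAt.continuousWithinAt) (fun t _ => hd t)
  refine ⟨t, ht.1, ht.2, ?_⟩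
  rw [he]
  simp

/-- A differentiable V : ℝ^d → ℝ with L-Lipschitz gradient (L > 0)
satisfying the dissipativity inequality ⟨∇V(x), x⟩ ≥ a‖x‖² − b (a, b > 0)
attains its infimum, and V(x) − inf V ≤ 2L(‖x‖² + b/a) for all x. -/
theorem dissipative_lipschitz_potential_bound
    (d : ℕ) (V : EuclideanSpace ℝ (Fin d) → ℝ) (L a b : ℝ)
    (hL : 0 < L) (ha : 0 < a) (hb : 0 < b)
    (hdiff : Differentiable ℝ V)
    (hlip : LipschitzWith L.toNNReal (fun x => gradient V x))
    (hdiss : ∀ x, a * ‖x‖ ^ 2 - b ≤ ⟪gradient V x, x⟫) :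
    (∃ x₀, ∀ y, V x₀ ≤ V y) ∧
    ∀ x, V x - (⨅ y, V y) ≤ 2 * L * (‖x‖ ^ 2 + b / a) := by
  have hR : 0 < b / a := div_pos hb ha
  set R := √(b / a) with hRdef
  have hR0 : 0 < R := Real.sqrt_pos.2 hR
  have hR2 : R ^ 2 = b / a := Real.sq_sqrt hR.le
  have haR : a * R ^ 2 = b := by rw [hR2]; field_simp
  obtain ⟨x₀, hx₀, hmin⟩ := (isCompact_closedBall (0 : EuclideanSpace ℝ (Fin d)) R).exists_isMinOn
    ⟨0, by simp [hR0.le]⟩ hdiff.continuous.continuousOn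
  have hx₀R : ‖x₀‖ ≤ R := by simpa using hx₀
  have hglob : ∀ y, V x₀ ≤ V y := by
    intro y
    by_cases hy : ‖y‖ ≤ R
    · exact hmin (by simpa using hy)
    push Not at hy
    have hy0 : 0 < ‖y‖ := hR0.trans hy
    set s := R / ‖y‖ with hs
    have hs0 : 0 < s := div_pos hR0 hy0
    have hs1 : s < 1 := (div_lt_one hy0).2 hy
    have hsy : s * ‖y‖ = R := by rw [hs]; field_simp
    have hz : V x₀ ≤ V (s • y) := by
      apply hmin
      simp [norm_smul, abs_of_pos hs0, hsy]
    obtain ⟨t, ht0, ht1, he⟩ := grad_mvt V hdiff (s • y) ((1 - s) • y)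
    have e1 : s • y + (1 - s) • y = y := by module
    have e2 : s • y + t • (1 - s) • y = (s + t * (1 - s)) • y := by module
    rw [e1, e2, inner_smul_right] at he
    set c := s + t * (1 - s) with hc
    have hcs : s ≤ c := by
      have := mul_pos ht0 (sub_pos.2 hs1)
      linarith
    have hc0 : 0 < c := hs0.trans_le hcs
    have hdi := hdiss (c • y)
    rw [inner_smul_right, norm_smul, Real.norm_of_nonneg hc0.le] at hdi
    have h3 : R ≤ c * ‖y‖ := by
      rw [← hsy]; gcongr
    have h4 : a * R ^ 2 ≤ a * (c * ‖y‖) ^ 2 := by gcongr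
    have h5 : 0 ≤ c * ⟪gradient V (c • y), y⟫ := by linarith
    have h6 : 0 ≤ ⟪gradient V (c • y), y⟫ := nonneg_of_mul_nonneg_right h5 hc0
    have h7 := mul_nonneg (sub_pos.2 hs1).le h6
    linarith
  refine ⟨⟨x₀, hglob⟩, fun x => ?_⟩
  have hinf : V x₀ ≤ ⨅ y, V y := le_ciInf hglob
  have hg0 : gradient V x₀ = 0 := by
    have : IsLocalMin V x₀ := Filter.Eventually.of_forall hglob
    simp [gradient, this.fderiv_eq_zero]
  obtain ⟨t, ht0, ht1, he⟩ := grad_mvt V hdiff x₀ (x - x₀)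
  rw [add_sub_cancel] at he
  have hl := hlip.dist_le_mul (x₀ + t • (x - x₀)) x₀
  simp only [hg0, sub_zero, dist_eq_norm, add_sub_cancel_left, norm_smul,
    Real.norm_of_nonneg ht0.le, Real.coe_toNNReal L hL.le] at hl
  have hn := norm_nonneg (x - x₀)
  have h1 : ⟪gradient V (x₀ + t • (x - x₀)), x - x₀⟫ ≤ L * ‖x - x₀‖ * ‖x - x₀‖ := by
    refine (real_inner_le_norm _ _).trans ?_
    gcongr
    refine hl.trans ?_
    gcongr
    exact mul_le_of_le_one_left hn ht1.le
  have h2 : ‖x - x₀‖ ^ 2 ≤ 2 * (‖x‖ ^ 2 + b / a) := by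
    have h3 := norm_sub_le x x₀
    have h4 : ‖x - x₀‖ ^ 2 ≤ (‖x‖ + ‖x₀‖) ^ 2 := by gcongr
    have h5 : ‖x₀‖ ^ 2 ≤ R ^ 2 := by gcongr
    nlinarith [sq_nonneg (‖x‖ - ‖x₀‖)]
  have h3 := mul_le_mul_of_nonneg_left h2 hL.le
  nlinarith
end

section
/- Let V_ν, V_π : ℝ^d → ℝ be differentiable with Lipschitz gradients, satisfying the dissipativity conditions ⟨∇V_ν(x), x⟩ ≥ a_ν‖x‖² − b_ν and ⟨∇V_π(x), x⟩ ≥ a_π‖x‖² − b_π for all x, with a_ν, a_π, b_ν, b_π > 0. For λ ∈ [0,1] let μ_λ be the probability density proportional to exp(−(1−λ)V_ν(x) − λV_π(x)). Then the second moment of μ_λ satisfies ∫ ‖x‖² dμ_λ(x) ≤ (d + b_ν + b_π) / min(a_ν, a_π). -/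
open MeasureTheory Real RealInnerProductSpace

lemma aux_lower {d : ℕ} (V : EuclideanSpace ℝ (Fin d) → ℝ) (a b : ℝ) (ha : 0 < a) (hb : 0 < b)
    (hV : Differentiable ℝ V) (hdis : ∀ x, a * ‖x‖ ^ 2 - b ≤ fderiv ℝ V x x) :
    ∃ c : ℝ, ∀ x, c + a / 4 * ‖x‖ ^ 2 ≤ V x := by
  obtain ⟨R, hR, hR2⟩ : ∃ R : ℝ, 0 < R ∧ b ≤ a / 2 * R ^ 2 := by
    refine ⟨√(2 * b / a), by positivity, ?_⟩
    rw [Real.sq_sqrt (by positivity)]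
    apply le_of_eq
    field_simp
  have hcont : Continuous (fun x : EuclideanSpace ℝ (Fin d) => V x - a / 4 * ‖x‖ ^ 2) := by
    have := hV.continuous
    fun_prop
  obtain ⟨c, hc⟩ := ((isCompact_closedBall (0 : EuclideanSpace ℝ (Fin d)) R).image hcont).bddBelow
  have hc' : ∀ x : EuclideanSpace ℝ (Fin d), ‖x‖ ≤ R → c ≤ V x - a / 4 * ‖x‖ ^ 2 := by
    intro x hx
    exact hc ⟨x, by simpa using hx, rfl⟩
  refine ⟨c, fun x => ?_⟩
  by_cases hx : ‖x‖ ≤ R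
  · linarith [hc' x hx]
  push Not at hx
  have hx0 : 0 < ‖x‖ := hR.trans hx
  set s := R / ‖x‖ with hs
  have hs0 : 0 < s := by positivity
  have hs1 : s ≤ 1 := by rw [hs, div_le_one hx0]; exact hx.le
  have hsx : s * ‖x‖ = R := by rw [hs]; field_simp
  have hder : ∀ t : ℝ, HasDerivAt (fun t : ℝ => V (t • x) - a / 4 * (t ^ 2 * ‖x‖ ^ 2))
      (fderiv ℝ V (t • x) x - a / 4 * (2 * t * ‖x‖ ^ 2)) t := by
    intro t
    have h1 : HasDerivAt (fun t : ℝ => t • x) x t := by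
      simpa using (hasDerivAt_id t).smul_const x
    have h2 := (hV (t • x)).hasFDerivAt.comp_hasDerivAt t h1
    have h3 : HasDerivAt (fun t : ℝ => a / 4 * (t ^ 2 * ‖x‖ ^ 2)) (a / 4 * (2 * t * ‖x‖ ^ 2)) t := by
      simpa using (((hasDerivAt_pow 2 t).mul_const (‖x‖ ^ 2)).const_mul (a / 4))
    exact h2.sub h3
  have hmono : MonotoneOn (fun t : ℝ => V (t • x) - a / 4 * (t ^ 2 * ‖x‖ ^ 2)) (Set.Icc s 1) := by
    apply monotoneOn_of_deriv_nonneg (convex_Icc s 1)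
    · exact fun t _ => (hder t).continuousAt.continuousWithinAt
    · exact fun t _ => (hder t).differentiableAt.differentiableWithinAt
    · intro t ht
      rw [interior_Icc] at ht
      have ht0 : 0 < t := hs0.trans ht.1
      rw [(hder t).deriv]
      have h := hdis (t • x)
      rw [map_smul, norm_smul, Real.norm_of_nonneg ht0.le, smul_eq_mul] at h
      have h5 : R ≤ t * ‖x‖ := by
        rw [← hsx]; exact mul_le_mul_of_nonneg_right ht.1.le hx0.le
      have h6 : R ^ 2 ≤ (t * ‖x‖) ^ 2 := pow_le_pow_left₀ hR.le h5 2
      have h7 : a / 2 * R ^ 2 ≤ a / 2 * (t * ‖x‖) ^ 2 := mul_le_mul_of_nonneg_left h6 (by positivity)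
      refine le_of_mul_le_mul_left ?_ ht0
      nlinarith
  have h := hmono (Set.left_mem_Icc.2 hs1) (Set.right_mem_Icc.2 hs1) hs1
  have h8 : ‖s • x‖ = s * ‖x‖ := by rw [norm_smul, Real.norm_of_nonneg hs0.le]
  have h9 := hc' (s • x) (by rw [h8, hsx])
  rw [h8] at h9
  simp only [one_smul, one_pow, one_mul] at h
  rw [mul_pow] at h9
  linarith

lemma aux_integrable {d : ℕ} (V : EuclideanSpace ℝ (Fin d) → ℝ) (a c : ℝ) (ha : 0 < a)
    (hV : Continuous V) (hlow : ∀ x, c + a / 4 * ‖x‖ ^ 2 ≤ V x)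
    (f : EuclideanSpace ℝ (Fin d) → ℝ) (hf : Continuous f) (K : ℝ)
    (hK : ∀ x, |f x| ≤ K * (1 + ‖x‖ ^ 2)) :
    Integrable (fun x => f x * Real.exp (-V x)) := by
  have hG : Integrable (fun x : EuclideanSpace ℝ (Fin d) => Real.exp (-(a / 8) * ‖x‖ ^ 2)) := by
    by_contra hn
    have h1 := GaussianFourier.integral_rexp_neg_mul_sq_norm
      (V := EuclideanSpace ℝ (Fin d)) (b := a / 8) (by positivity)
    rw [integral_undef hn] at h1
    have : 0 < (π / (a / 8)) ^ (Module.finrank ℝ (EuclideanSpace ℝ (Fin d)) / 2 : ℝ) := by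
      positivity
    linarith
  refine Integrable.mono' (hG.const_mul (K * (1 + 8 / a) * Real.exp (-c)))
    (by fun_prop : Continuous fun x => f x * Real.exp (-V x)).aestronglyMeasurable
    (Filter.Eventually.of_forall fun x => ?_)
  have hK0 : 0 ≤ K := by
    have := (abs_nonneg _).trans (hK 0)
    simpa using this
  rw [Real.norm_eq_abs, abs_mul, Real.abs_exp]
  have e1 : Real.exp (-V x) ≤ Real.exp (-c) * (Real.exp (-(a / 8) * ‖x‖ ^ 2) *
      Real.exp (-(a / 8) * ‖x‖ ^ 2)) := by
    rw [← Real.exp_add, ← Real.exp_add]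
    apply Real.exp_le_exp.2
    linarith [hlow x]
  have e2 : 1 + ‖x‖ ^ 2 ≤ (1 + 8 / a) * Real.exp (a / 8 * ‖x‖ ^ 2) := by
    have h := Real.add_one_le_exp (a / 8 * ‖x‖ ^ 2)
    have h0 : 0 ≤ a / 8 * ‖x‖ ^ 2 := by positivity
    have h2 : 8 / a * (a / 8 * ‖x‖ ^ 2) ≤ 8 / a * Real.exp (a / 8 * ‖x‖ ^ 2) :=
      mul_le_mul_of_nonneg_left (by linarith) (by positivity)
    have h3 : 8 / a * (a / 8 * ‖x‖ ^ 2) = ‖x‖ ^ 2 := by field_simp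
    linarith
  have e3 : Real.exp (a / 8 * ‖x‖ ^ 2) * Real.exp (-(a / 8) * ‖x‖ ^ 2) = 1 := by
    rw [← Real.exp_add]; simp
  calc |f x| * Real.exp (-V x)
      ≤ (K * ((1 + 8 / a) * Real.exp (a / 8 * ‖x‖ ^ 2))) *
        (Real.exp (-c) * (Real.exp (-(a / 8) * ‖x‖ ^ 2) * Real.exp (-(a / 8) * ‖x‖ ^ 2))) := by
        refine mul_le_mul ((hK x).trans (mul_le_mul_of_nonneg_left e2 hK0)) e1 (by positivity)
          (by positivity)
    _ = K * (1 + 8 / a) * Real.exp (-c) * Real.exp (-(a / 8) * ‖x‖ ^ 2) *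
        (Real.exp (a / 8 * ‖x‖ ^ 2) * Real.exp (-(a / 8) * ‖x‖ ^ 2)) := by ring
    _ = _ := by rw [e3, mul_one]

lemma aux_main {d : ℕ} (V : EuclideanSpace ℝ (Fin d) → ℝ) (a b : ℝ) (ha : 0 < a) (hb : 0 < b)
    (hV : Differentiable ℝ V) (hdis : ∀ x, a * ‖x‖ ^ 2 - b ≤ fderiv ℝ V x x)
    (hC : Continuous (fderiv ℝ V)) (K : ℝ) (hK : ∀ x, ‖fderiv ℝ V x‖ ≤ K * (1 + ‖x‖)) :
    (∫ x, ‖x‖ ^ 2 * Real.exp (-V x)) / (∫ x, Real.exp (-V x)) ≤ (d + b) / a := by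
  obtain ⟨c, hc⟩ := aux_lower V a b ha hb hV hdis
  have hint := aux_integrable V a c ha hV.continuous hc
  have hK0 : 0 ≤ K := by
    have := (norm_nonneg _).trans (hK 0)
    simpa using this
  have hZi : Integrable (fun x => Real.exp (-V x)) := by
    simpa using hint (fun _ => 1) continuous_const 1 (fun x => by simp)
  have hMi : Integrable (fun x => ‖x‖ ^ 2 * Real.exp (-V x)) :=
    hint (fun x => ‖x‖ ^ 2) (by fun_prop) 1 (fun x => by simp)
  have hZ : 0 < ∫ x, Real.exp (-V x) := integral_exp_pos hZi
  let e : Fin d → EuclideanSpace ℝ (Fin d) := fun i => EuclideanSpace.single i 1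
  have hcoord : ∀ (x : EuclideanSpace ℝ (Fin d)) i, |x i| ≤ ‖x‖ := fun x i => by
    simpa using PiLp.norm_apply_le x i
  have hDi : ∀ i, Integrable (fun x => (x i * fderiv ℝ V x (e i)) * Real.exp (-V x)) := by
    intro i
    refine hint (fun x => x i * fderiv ℝ V x (e i)) (by fun_prop) (2 * K) (fun x => ?_)
    have h1 : |fderiv ℝ V x (e i)| ≤ K * (1 + ‖x‖) := by
      have := (fderiv ℝ V x).le_opNorm (e i)
      simp only [e, EuclideanSpace.norm_single, norm_one, mul_one, Real.norm_eq_abs] at this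
      exact this.trans (hK x)
    rw [abs_mul]
    calc _ ≤ ‖x‖ * (K * (1 + ‖x‖)) :=
          mul_le_mul (hcoord x i) h1 (abs_nonneg _) (norm_nonneg _)
      _ = K * (‖x‖ * (1 + ‖x‖)) := by ring
      _ ≤ K * (2 * (1 + ‖x‖ ^ 2)) := by
          apply mul_le_mul_of_nonneg_left _ hK0
          nlinarith [sq_nonneg (‖x‖ - 1)]
      _ = _ := by ring
  have hdexp : ∀ x v, fderiv ℝ (fun x => Real.exp (-V x)) x v
      = -(fderiv ℝ V x v * Real.exp (-V x)) := by
    intro x v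
    have : HasFDerivAt (fun x => Real.exp (-V x)) (Real.exp (-V x) • -fderiv ℝ V x) x :=
      ((hV x).hasFDerivAt.neg).exp
    rw [HasFDerivAt.fderiv this]
    simp [mul_comm]
  have hdco : ∀ i (x : EuclideanSpace ℝ (Fin d)),
      fderiv ℝ (fun y : EuclideanSpace ℝ (Fin d) => y i) x (e i) = 1 := by
    intro i x
    have : HasFDerivAt (fun y : EuclideanSpace ℝ (Fin d) => y i)
      (EuclideanSpace.proj i : EuclideanSpace ℝ (Fin d) →L[ℝ] ℝ) x :=
      (EuclideanSpace.proj i : EuclideanSpace ℝ (Fin d) →L[ℝ] ℝ).hasFDerivAt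
    rw [this.fderiv]
    simp [e]
  have hibp : ∀ i, ∫ x, (x i * fderiv ℝ V x (e i)) * Real.exp (-V x) = ∫ x, Real.exp (-V x) := by
    intro i
    have h := integral_mul_fderiv_eq_neg_fderiv_mul_of_integrable
      (μ := (volume : Measure (EuclideanSpace ℝ (Fin d))))
      (f := fun x => x i) (g := fun x => Real.exp (-V x)) (v := e i)
      (by simpa only [hdco, one_mul] using hZi)
      (by
        simp only [hdexp]
        refine (hDi i).neg.congr (Filter.Eventually.of_forall fun x => ?_)
        simp only [Pi.neg_apply]; ring)
      (by
        refine hint (fun x => x i) (by fun_prop) 1 (fun x => (hcoord x i).trans ?_)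
        nlinarith [sq_nonneg (‖x‖ - 1)])
      (fun x _ => by fun_prop) (fun x _ => by fun_prop)
    simp only [hdexp, hdco, one_mul] at h
    rw [← neg_inj, ← h, ← integral_neg]
    congr 1; ext x; ring
  have hsum : ∀ x, fderiv ℝ V x x * Real.exp (-V x) =
      ∑ i, (x i * fderiv ℝ V x (e i)) * Real.exp (-V x) := by
    intro x
    rw [← Finset.sum_mul]
    congr 1
    have hx : x = ∑ i, x i • e i := by
      have := (EuclideanSpace.basisFun (Fin d) ℝ).sum_repr x
      simpa [e] using this.symm
    have hy := congrArg (fderiv ℝ V x) hx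
    rw [map_sum] at hy
    simpa only [map_smul, smul_eq_mul] using hy
  have hTot : ∫ x, fderiv ℝ V x x * Real.exp (-V x) = d * ∫ x, Real.exp (-V x) := by
    simp only [hsum]
    rw [integral_finsetSum _ (fun i _ => hDi i)]
    simp [hibp]
  have hTi : Integrable (fun x => fderiv ℝ V x x * Real.exp (-V x)) := by
    simp only [hsum]
    exact integrable_finsetSum _ (fun i _ => hDi i)
  have hle : ∫ x, (a * (‖x‖ ^ 2 * Real.exp (-V x)) - b * Real.exp (-V x)) ≤
      ∫ x, fderiv ℝ V x x * Real.exp (-V x) := by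
    refine integral_mono ((hMi.const_mul a).sub (hZi.const_mul b)) hTi (fun x => ?_)
    have := mul_le_mul_of_nonneg_right (hdis x) (Real.exp_pos (-V x)).le
    simp only
    linarith
  rw [integral_sub (hMi.const_mul a) (hZi.const_mul b), integral_const_mul, integral_const_mul,
    hTot] at hle
  rw [div_le_div_iff₀ hZ ha]
  linarith

lemma aux_grad {d : ℕ} (V : EuclideanSpace ℝ (Fin d) → ℝ)
    (h : ∃ L : NNReal, LipschitzWith L (fun x => gradient V x)) :
    Continuous (fderiv ℝ V) ∧ ∃ K : ℝ, ∀ x, ‖fderiv ℝ V x‖ ≤ K * (1 + ‖x‖) := by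
  obtain ⟨L, hL⟩ := h
  constructor
  · rw [← toDual_comp_gradient]
    exact (LinearIsometryEquiv.continuous _).comp hL.continuous
  · refine ⟨L + ‖gradient V 0‖, fun x => ?_⟩
    rw [← toDual_gradient, LinearIsometryEquiv.norm_map]
    have h1 := hL.norm_sub_le x 0
    rw [sub_zero] at h1
    have h2 := norm_le_norm_add_norm_sub' (gradient V x) (gradient V 0)
    have h3 : 0 ≤ ‖gradient V 0‖ * ‖x‖ := by positivity
    have h4 : (0 : ℝ) ≤ L := L.2
    linarith

/-- If V_ν, V_π : ℝ^d → ℝ are differentiable with Lipschitz gradients and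
dissipative with constants (a_ν, b_ν), (a_π, b_π), then the geometric tempering density
μ_λ ∝ exp(−(1−λ)V_ν − λV_π) has second moment at most (d + b_ν + b_π)/min(a_ν, a_π). -/
theorem geometric_tempering_second_moment_bound
    (d : ℕ) (Vnu Vpi : EuclideanSpace ℝ (Fin d) → ℝ)
    (anu api bnu bpi : ℝ)
    (hanu : 0 < anu) (hapi : 0 < api) (hbnu : 0 < bnu) (hbpi : 0 < bpi)
    (hdnu : Differentiable ℝ Vnu) (hdpi : Differentiable ℝ Vpi)
    (hlipnu : ∃ Lnu : NNReal, LipschitzWith Lnu (fun x => gradient Vnu x))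
    (hlippi : ∃ Lpi : NNReal, LipschitzWith Lpi (fun x => gradient Vpi x))
    (hdissnu : ∀ x, anu * ‖x‖ ^ 2 - bnu ≤ ⟪gradient Vnu x, x⟫)
    (hdisspi : ∀ x, api * ‖x‖ ^ 2 - bpi ≤ ⟪gradient Vpi x, x⟫)
    (lam : ℝ) (hlam : lam ∈ Set.Icc (0 : ℝ) 1) :
    (∫ x : EuclideanSpace ℝ (Fin d),
        ‖x‖ ^ 2 * Real.exp (-((1 - lam) * Vnu x + lam * Vpi x)))
      / (∫ x : EuclideanSpace ℝ (Fin d), Real.exp (-((1 - lam) * Vnu x + lam * Vpi x)))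
      ≤ (d + bnu + bpi) / min anu api := by
  obtain ⟨h0, h1⟩ := hlam
  have h1' : 0 ≤ 1 - lam := by linarith
  obtain ⟨cn, Kn, hKn⟩ := aux_grad Vnu hlipnu
  obtain ⟨cp, Kp, hKp⟩ := aux_grad Vpi hlippi
  have hf : ∀ x, fderiv ℝ (fun x => (1 - lam) * Vnu x + lam * Vpi x) x =
      (1 - lam) • fderiv ℝ Vnu x + lam • fderiv ℝ Vpi x := fun x =>
    (((hdnu x).hasFDerivAt.const_mul _).add ((hdpi x).hasFDerivAt.const_mul _)).fderiv
  rw [add_assoc]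
  refine aux_main (fun x => (1 - lam) * Vnu x + lam * Vpi x) (min anu api) (bnu + bpi)
    (lt_min hanu hapi) (by positivity) (by fun_prop) (fun x => ?_) ?_
    ((1 - lam) * Kn + lam * Kp) (fun x => ?_)
  · have hn := hdissnu x
    have hp := hdisspi x
    rw [inner_gradient_left] at hn hp
    rw [hf]
    simp only [add_apply, smul_apply, smul_eq_mul]
    have hn' : min anu api * ‖x‖ ^ 2 - bnu ≤ fderiv ℝ Vnu x x := by
      have := mul_le_mul_of_nonneg_right (min_le_left anu api) (sq_nonneg ‖x‖)
      linarith
    have hp' : min anu api * ‖x‖ ^ 2 - bpi ≤ fderiv ℝ Vpi x x := by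
      have := mul_le_mul_of_nonneg_right (min_le_right anu api) (sq_nonneg ‖x‖)
      linarith
    have k1 := mul_le_mul_of_nonneg_left hn' h1'
    have k2 := mul_le_mul_of_nonneg_left hp' h0
    have k3 := mul_nonneg h0 hbnu.le
    have k4 := mul_nonneg h1' hbpi.le
    linarith
  · rw [funext hf]
    fun_prop
  · rw [hf]
    refine (norm_add_le _ _).trans ?_
    rw [norm_smul, norm_smul, Real.norm_of_nonneg h0, Real.norm_of_nonneg h1']
    have k1 := mul_le_mul_of_nonneg_left (hKn x) h1'
    have k2 := mul_le_mul_of_nonneg_left (hKp x) h0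
    linarith
end

section
/- Let 0 < α_ν ≤ α_π and t > 0. Let λ : [0,t] → [0,1] be nondecreasing and absolutely continuous (i.e. λ_s = λ_0 + ∫_0^s g(v) dv for some nonnegative integrable g), and set α_s := (1−λ_s)α_ν + λ_s α_π. Define G_t(λ) := 1 − 2 ∫_0^t λ_s α_s exp( −2 ∫_s^t α_v dv ) ds. Then G_t(λ) ≥ exp(−2 α_π t), i.e. G_t is minimized over such schedules by the constant schedule λ ≡ 1, for which G_t(1) = exp(−2 α_π t). -/
open MeasureTheory Real intervalIntegral

theorem aux_hasDeriv (a : ℝ → ℝ) (ha : Continuous a) (t s : ℝ) :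
    HasDerivAt (fun s => Real.exp (-(2 * ∫ v in s..t, a v)))
      (2 * (a s * Real.exp (-(2 * ∫ v in s..t, a v)))) s := by
  have h1 : HasDerivAt (fun s => ∫ v in s..t, a v) (-a s) s :=
    intervalIntegral.integral_hasDerivAt_left (ha.intervalIntegrable _ _)
      (ha.stronglyMeasurableAtFilter _ _) ha.continuousAt
  have h2 := ((h1.const_mul 2).neg).exp
  have h3 : 2 * (a s * Real.exp (-(2 * ∫ v in s..t, a v)))
      = Real.exp (-(2 * ∫ v in s..t, a v)) * -(2 * -a s) := by ring
  rw [h3]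
  exact h2

theorem aux_cont (a : ℝ → ℝ) (ha : Continuous a) (t : ℝ) :
    Continuous (fun s => Real.exp (-(2 * ∫ v in s..t, a v))) :=
  continuous_iff_continuousAt.2 fun s => (aux_hasDeriv a ha t s).continuousAt

theorem aux_int (a : ℝ → ℝ) (ha : Continuous a) (t : ℝ) :
    2 * ∫ s in (0:ℝ)..t, a s * Real.exp (-(2 * ∫ v in s..t, a v))
      = 1 - Real.exp (-(2 * ∫ v in (0:ℝ)..t, a v)) := by
  rw [← intervalIntegral.integral_const_mul]
  rw [intervalIntegral.integral_eq_sub_of_hasDerivAt (fun s _ => aux_hasDeriv a ha t s)]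
  · simp
  · exact ((continuous_const.mul (ha.mul (aux_cont a ha t)))).intervalIntegrable _ _

/-- For 0 < α_ν ≤ α_π and any nondecreasing, absolutely continuous
tempering schedule λ : [0,t] → [0,1], with α_s = (1−λ_s)α_ν + λ_s α_π, the functional
G_t(λ) = 1 − 2∫₀ᵗ λ_s α_s exp(−2∫ₛᵗ α_v dv) ds satisfies G_t(λ) ≥ exp(−2α_π t); i.e.
G_t is minimized by the constant schedule λ ≡ 1, for which G_t(1) = exp(−2α_π t). -/
theorem vanilla_langevin_optimal_when_target_better_conditioned
    (anu api t : ℝ) (hanu : 0 < anu) (hord : anu ≤ api) (ht : 0 < t)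
    (lam g : ℝ → ℝ)
    (hrange : ∀ s ∈ Set.Icc (0 : ℝ) t, lam s ∈ Set.Icc (0 : ℝ) 1)
    (hmono : MonotoneOn lam (Set.Icc (0 : ℝ) t))
    (hg_nonneg : ∀ s, 0 ≤ g s)
    (hg_int : IntegrableOn g (Set.Icc (0 : ℝ) t))
    (habs : ∀ s ∈ Set.Icc (0 : ℝ) t, lam s = lam 0 + ∫ v in (0 : ℝ)..s, g v) :
    Real.exp (-(2 * api * t))
      ≤ 1 - 2 * ∫ s in (0 : ℝ)..t,
          lam s * ((1 - lam s) * anu + lam s * api)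
            * Real.exp (-(2 * ∫ v in s..t, ((1 - lam v) * anu + lam v * api))) ∧
    1 - 2 * ∫ s in (0 : ℝ)..t,
        (1 : ℝ) * api * Real.exp (-(2 * ∫ v in s..t, api))
      = Real.exp (-(2 * api * t)) := by
  constructor
  · have hc : ContinuousOn lam (Set.Icc 0 t) := by
      have h := intervalIntegral.continuousOn_primitive_interval (a := (0:ℝ)) (b := t) (f := g)
        (μ := volume) (by rwa [Set.uIcc_of_le ht.le])
      rw [Set.uIcc_of_le ht.le] at h
      exact (continuousOn_const.add h).congr habs
    obtain ⟨L, hL, hLc, hLr⟩ : ∃ L : ℝ → ℝ, (∀ s ∈ Set.Icc 0 t, lam s = L s) ∧ Continuous L ∧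
        ∀ s, L s ∈ Set.Icc (0:ℝ) 1 := by
      refine ⟨Set.IccExtend ht.le (Set.restrict (Set.Icc 0 t) lam), ?_, ?_, ?_⟩
      · intro s hs
        rw [Set.IccExtend_of_mem _ _ hs]
        rfl
      · exact (continuousOn_iff_continuous_restrict.1 hc).Icc_extend'
      · intro s
        exact hrange _ (Set.projIcc 0 t ht.le s).2
    have ha : Continuous (fun s => (1 - L s) * anu + L s * api) := by fun_prop
    have key := aux_int _ ha t
    have hE := aux_cont _ ha t
    have h1 : (∫ s in (0 : ℝ)..t, lam s * ((1 - lam s) * anu + lam s * api)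
            * Real.exp (-(2 * ∫ v in s..t, ((1 - lam v) * anu + lam v * api))))
        = ∫ s in (0 : ℝ)..t, L s * ((1 - L s) * anu + L s * api)
            * Real.exp (-(2 * ∫ v in s..t, ((1 - L v) * anu + L v * api))) := by
      apply intervalIntegral.integral_congr
      intro s hs
      rw [Set.uIcc_of_le ht.le] at hs
      have h2 : (∫ v in s..t, ((1 - lam v) * anu + lam v * api))
          = ∫ v in s..t, ((1 - L v) * anu + L v * api) := by
        apply intervalIntegral.integral_congr
        intro v hv
        rw [Set.uIcc_of_le hs.2] at hv
        simp only [hL v ⟨hs.1.trans hv.1, hv.2⟩]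
      simp only [h2, hL s hs]
    rw [h1]
    have h3 : (∫ s in (0 : ℝ)..t, L s * ((1 - L s) * anu + L s * api)
            * Real.exp (-(2 * ∫ v in s..t, ((1 - L v) * anu + L v * api))))
        ≤ ∫ s in (0 : ℝ)..t, ((1 - L s) * anu + L s * api)
            * Real.exp (-(2 * ∫ v in s..t, ((1 - L v) * anu + L v * api))) := by
      apply intervalIntegral.integral_mono_on ht.le
      · exact ((hLc.mul ha).mul hE).intervalIntegrable _ _
      · exact (ha.mul hE).intervalIntegrable _ _
      · intro s _
        have h0 := (hLr s).1
        have h0' := (hLr s).2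
        have hapi : 0 < api := hanu.trans_le hord
        have hp : 0 ≤ (1 - L s) * anu + L s * api :=
          add_nonneg (mul_nonneg (sub_nonneg.2 h0') hanu.le) (mul_nonneg h0 hapi.le)
        exact mul_le_mul_of_nonneg_right (mul_le_of_le_one_left hp h0') (Real.exp_pos _).le
    have h4 : (∫ v in (0:ℝ)..t, ((1 - L v) * anu + L v * api)) ≤ ∫ v in (0:ℝ)..t, api := by
      apply intervalIntegral.integral_mono_on ht.le (ha.intervalIntegrable _ _)
        (continuous_const.intervalIntegrable _ _)
      intro s _
      nlinarith [(hLr s).2]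
    rw [intervalIntegral.integral_const, smul_eq_mul] at h4
    have h5 : Real.exp (-(2 * api * t))
        ≤ Real.exp (-(2 * ∫ v in (0:ℝ)..t, ((1 - L v) * anu + L v * api))) := by
      apply Real.exp_le_exp.2
      linarith
    linarith
  · have key := aux_int (fun _ => api) continuous_const t
    simp only [one_mul]
    rw [key, intervalIntegral.integral_const, smul_eq_mul, sub_sub_cancel]
    congr 1
    ring
end

section
/- Let 0 < α_π < α_ν and t > 0. For the linear schedule λ_s = s/t on [0,t], with α_v := (1 − v/t)α_ν + (v/t)α_π, the quantity G_t := (1/t) ∫_0^t exp( −2 ∫_s^t α_v dv ) ds satisfies the identity G_t = √(π / (4t(α_ν − α_π))) · [ erfcx( α_π √(t/(α_ν − α_π)) ) − e^{−(α_ν + α_π)t} · erfcx( α_ν √(t/(α_ν − α_π)) ) ], where erfcx(x) = e^{x²}(1 − erf(x)) and erf(z) = (2/√π) ∫_0^z e^{−x²} dx. -/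
open MeasureTheory Real intervalIntegral

/-- The error function erf(z) = (2/√π) ∫₀ᶻ e^{−x²} dx. -/
noncomputable def erf (z : ℝ) : ℝ :=
  (2 / Real.sqrt Real.pi) * ∫ x in (0 : ℝ)..z, Real.exp (-x ^ 2)

/-- The complementary scaled error function erfcx(x) = e^{x²}(1 − erf(x)). -/
noncomputable def erfcx (x : ℝ) : ℝ := Real.exp (x ^ 2) * (1 - erf x)

/-- For 0 < α_π < α_ν, t > 0 and the linear schedule λ_s = s/t,
with α_v = (1 − v/t)α_ν + (v/t)α_π, the quantity
G_t = (1/t)∫₀ᵗ exp(−2∫ₛᵗ α_v dv) ds equals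
√(π/(4t(α_ν−α_π)))·[erfcx(α_π√(t/(α_ν−α_π))) − e^{−(α_ν+α_π)t} erfcx(α_ν√(t/(α_ν−α_π)))]. -/
theorem linear_tempering_upper_bound_closed_form
    (anu api t : ℝ) (hapi : 0 < api) (hord : api < anu) (ht : 0 < t) :
    (1 / t) * ∫ s in (0 : ℝ)..t,
        Real.exp (-(2 * ∫ v in s..t, ((1 - v / t) * anu + (v / t) * api)))
      = Real.sqrt (Real.pi / (4 * t * (anu - api)))
          * (erfcx (api * Real.sqrt (t / (anu - api)))
              - Real.exp (-((anu + api) * t)) * erfcx (anu * Real.sqrt (t / (anu - api)))) := by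
  have hd : 0 < anu - api := sub_pos.mpr hord
  obtain ⟨k, hk⟩ : ∃ k, k = Real.sqrt (t / (anu - api)) := ⟨_, rfl⟩
  have hkpos : 0 < k := by rw [hk]; positivity
  have hk2 : k ^ 2 = t / (anu - api) := by rw [hk]; exact Real.sq_sqrt (by positivity)
  have hk2' : k ^ 2 * (anu - api) = t := by rw [hk2]; field_simp
  rw [← hk]
  have hinner : ∀ s : ℝ, ∫ v in s..t, ((1 - v / t) * anu + (v / t) * api)
      = (k ^ 2 * (anu - (anu - api) / t * s) ^ 2 - k ^ 2 * api ^ 2) / 2 := by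
    intro s
    have hF : ∀ v ∈ Set.uIcc s t, HasDerivAt
        (fun v : ℝ => anu * v - (anu - api) / t * (v ^ 2 / 2))
        ((1 - v / t) * anu + (v / t) * api) v := by
      intro v _
      have h := ((hasDerivAt_id' v).const_mul anu).sub
        ((((hasDerivAt_id' v).pow 2).div_const 2).const_mul ((anu - api) / t))
      refine h.congr_deriv ?_
      push_cast
      field_simp
      ring
    rw [intervalIntegral.integral_eq_sub_of_hasDerivAt hF
      (Continuous.intervalIntegrable (by fun_prop) _ _), hk2]
    field_simp
    ring
  have hfun : ∀ s : ℝ,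
      Real.exp (-(2 * ∫ v in s..t, ((1 - v / t) * anu + (v / t) * api)))
      = Real.exp (k ^ 2 * api ^ 2) *
        (fun x : ℝ => Real.exp (-x ^ 2)) (k * anu - k⁻¹ * s) := by
    intro s
    have hc : k⁻¹ = k * ((anu - api) / t) := by
      rw [← hk2']; field_simp
    rw [hinner s, hc]
    simp only
    rw [← Real.exp_add]
    congr 1
    ring
  have hkt : k * anu - k⁻¹ * t = api * k := by
    rw [← hk2']; field_simp; ring
  simp_rw [hfun]
  rw [intervalIntegral.integral_const_mul,
    intervalIntegral.integral_comp_sub_mul (fun x : ℝ => Real.exp (-x ^ 2)) (inv_ne_zero hkpos.ne'), hkt, mul_zero, sub_zero,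
    mul_comm k anu]
  have hint : ∀ a b : ℝ, IntervalIntegrable (fun x : ℝ => Real.exp (-x ^ 2)) volume a b :=
    fun a b => Continuous.intervalIntegrable (by fun_prop) _ _
  rw [← intervalIntegral.integral_interval_sub_left (hint 0 (anu * k)) (hint 0 (api * k))]
  have hsq : Real.sqrt (Real.pi / (4 * t * (anu - api))) = Real.sqrt Real.pi / 2 * (k / t) := by
    have h1 : Real.pi / (4 * t * (anu - api)) = (Real.sqrt Real.pi / 2 * (k / t)) ^ 2 := by
      rw [mul_pow, div_pow, div_pow, Real.sq_sqrt Real.pi_pos.le, hk2]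
      field_simp
      norm_num
    rw [h1, Real.sqrt_sq (by positivity)]
  have hexp : Real.exp (-((anu + api) * t)) * Real.exp ((anu * k) ^ 2)
      = Real.exp (k ^ 2 * api ^ 2) := by
    rw [← Real.exp_add, ← hk2']
    congr 1
    ring
  have hexp2 : Real.exp ((api * k) ^ 2) = Real.exp (k ^ 2 * api ^ 2) := by
    congr 1; ring
  have hpi : Real.sqrt Real.pi ≠ 0 := by positivity
  rw [hsq]
  unfold erfcx erf
  rw [← mul_assoc (Real.exp (-((anu + api) * t))), hexp, hexp2, inv_inv, smul_eq_mul]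
  field_simp
  ring
end

section
/- Let 0 < α_π < α_ν. For each t > 0 define, with the linear schedule α_v := (1 − v/t)α_ν + (v/t)α_π, the quantity G_t := (1/t) ∫_0^t exp( −2 ∫_s^t α_v dv ) ds. Then G_t ~ 1/(2 α_π t) as t → ∞; that is, the function t ↦ 2 α_π t · G_t tends to 1 as t → ∞. -/
open MeasureTheory Real intervalIntegral Filter

theorem inner_schedule_integral (anu api s t : ℝ) (ht : t ≠ 0) :
    ∫ v in s..t, ((1 - v / t) * anu + (v / t) * api)
      = api * (t - s) + (anu - api) * (t - s) ^ 2 / (2 * t) := by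
  have h : ∀ v ∈ Set.uIcc s t, HasDerivAt
      (fun v : ℝ => anu * v + (api - anu) / (2 * t) * v ^ 2)
      ((1 - v / t) * anu + (v / t) * api) v := by
    intro v _
    have h1 := ((hasDerivAt_id v).const_mul anu).add
      ((hasDerivAt_pow 2 v).const_mul ((api - anu) / (2 * t)))
    refine h1.congr_deriv ?_
    simp
    field_simp
    ring
  rw [integral_eq_sub_of_hasDerivAt h ((by fun_prop : Continuous _).intervalIntegrable _ _)]
  field_simp
  ring

/-- For 0 < α_π < α_ν and the linear schedule α_v = (1 − v/t)α_ν + (v/t)α_π,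
the quantity G_t = (1/t)∫₀ᵗ exp(−2∫ₛᵗ α_v dv) ds satisfies G_t ~ 1/(2α_π t) as t → ∞;
that is, 2α_π t · G_t → 1 as t → ∞. -/
theorem linear_tempering_upper_bound_asymptotics
    (anu api : ℝ) (hapi : 0 < api) (hord : api < anu) :
    Tendsto (fun t : ℝ =>
        2 * api * t * ((1 / t) * ∫ s in (0 : ℝ)..t,
          Real.exp (-(2 * ∫ v in s..t, ((1 - v / t) * anu + (v / t) * api)))))
      atTop (nhds 1) := by
  have key : Tendsto (fun t : ℝ => ∫ u in Set.Ioi (0 : ℝ), (Set.Iic t).indicator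
      (fun u => Real.exp (-2 * api * u - (anu - api) * u ^ 2 / t)) u) atTop
      (nhds (∫ u in Set.Ioi (0 : ℝ), Real.exp (-2 * api * u))) := by
    refine tendsto_integral_filter_of_dominated_convergence
      (fun u => Real.exp (-2 * api * u)) ?_ ?_ ?_ ?_
    · refine Eventually.of_forall fun t => ?_
      exact ((by fun_prop : Continuous fun u : ℝ =>
        Real.exp (-2 * api * u - (anu - api) * u ^ 2 / t)).aestronglyMeasurable).indicator
        measurableSet_Iic
    · filter_upwards [eventually_gt_atTop (0 : ℝ)] with t ht
      refine Eventually.of_forall fun u => ?_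
      refine (norm_indicator_le_norm_self _ _).trans ?_
      rw [Real.norm_eq_abs, abs_of_pos (Real.exp_pos _)]
      apply Real.exp_le_exp.2
      have : 0 ≤ (anu - api) * u ^ 2 / t := by
        have := sub_pos.2 hord
        positivity
      linarith
    · exact integrableOn_exp_mul_Ioi (by linarith) 0
    · refine Eventually.of_forall fun u => ?_
      have h1 : Tendsto (fun t : ℝ => Real.exp (-2 * api * u - (anu - api) * u ^ 2 / t)) atTop
          (nhds (Real.exp (-2 * api * u - 0))) :=
        (Real.continuous_exp.tendsto _).comp
          (tendsto_const_nhds.sub (tendsto_const_nhds.div_atTop tendsto_id))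
      rw [sub_zero] at h1
      refine h1.congr' ?_
      filter_upwards [eventually_ge_atTop u] with t ht
      rw [Set.indicator_of_mem (Set.mem_Iic.2 ht)]
  rw [integral_exp_mul_Ioi (by linarith)] at key
  have key2 := key.const_mul (2 * api)
  have e : 2 * api * (-Real.exp (-2 * api * 0) / (-2 * api)) = 1 := by
    rw [mul_zero, Real.exp_zero]
    field_simp
  rw [e] at key2
  refine key2.congr' ?_
  filter_upwards [eventually_gt_atTop (0 : ℝ)] with t ht
  have h2 : ∫ u in Set.Ioi (0 : ℝ), (Set.Iic t).indicator
      (fun u => Real.exp (-2 * api * u - (anu - api) * u ^ 2 / t)) u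
      = ∫ s in (0 : ℝ)..t,
          Real.exp (-(2 * ∫ v in s..t, ((1 - v / t) * anu + (v / t) * api))) := by
    rw [setIntegral_indicator measurableSet_Iic, Set.Ioi_inter_Iic,
      ← intervalIntegral.integral_of_le ht.le]
    have h3 := intervalIntegral.integral_comp_sub_left (a := 0) (b := t)
      (fun u => Real.exp (-2 * api * u - (anu - api) * u ^ 2 / t)) t
    rw [sub_self, sub_zero] at h3
    rw [← h3]
    refine intervalIntegral.integral_congr fun s _ => ?_
    simp only [inner_schedule_integral anu api s t ht.ne']
    congr 1
    field_simp
    ring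
  rw [h2]
  generalize (∫ s in (0 : ℝ)..t,
    Real.exp (-(2 * ∫ v in s..t, ((1 - v / t) * anu + (v / t) * api)))) = I
  field_simp
end

section
/- Let m ≥ 10. Let ν(x) = (2π)^{−1/2} e^{−x²/2} be the standard Gaussian density on ℝ, and let π(x) = (1 − e^{−m²/4}) g_m(x) + e^{−m²/4} u_m(x), where g_m(x) = (2π)^{−1/2} e^{−(x−m)²/2} and u_m(x) = e^{−d(x,[−m,2m])²/2} / (3m + √(2π)). For λ ∈ [1/2, 1], let μ_λ be the probability density proportional to ν^{1−λ} π^λ. Then any constant C ≥ 0 such that Var_{μ_λ}(f) ≤ C ∫ (f′)² dμ_λ for all smooth compactly supported f : ℝ → ℝ must satisfy C ≥ (1/(4·10⁴ m)) e^{m²(1−λ)/100} − m². In particular the Poincaré constant of μ_λ is at least (1/(4·10⁴ m)) e^{m²(1−λ)/100} − m². -/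
open MeasureTheory Real

/-- The standard Gaussian density on ℝ. -/
noncomputable def stdGauss (x : ℝ) : ℝ := Real.exp (-x ^ 2 / 2) / Real.sqrt (2 * Real.pi)

/-- The density of N(m, 1). -/
noncomputable def gaussAt (m x : ℝ) : ℝ := Real.exp (-(x - m) ^ 2 / 2) / Real.sqrt (2 * Real.pi)

/-- The smoothed uniform density on [−m, 2m]:
u_m(x) = e^{−d(x,[−m,2m])²/2}/(3m + √(2π)). -/
noncomputable def smUnif (m x : ℝ) : ℝ :=
  Real.exp (-(Metric.infDist x (Set.Icc (-m) (2 * m))) ^ 2 / 2) / (3 * m + Real.sqrt (2 * Real.pi))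

/-- The unimodal target π = (1 − e^{−m²/4}) N(m,1) + e^{−m²/4} u_m. -/
noncomputable def piDens (m x : ℝ) : ℝ :=
  (1 - Real.exp (-m ^ 2 / 4)) * gaussAt m x + Real.exp (-m ^ 2 / 4) * smUnif m x

/-- The geometric tempering density μ_λ = c_λ ν^{1−λ} π^λ of the standard Gaussian
and the unimodal target. -/
noncomputable def muDens (m lam x : ℝ) : ℝ :=
  stdGauss x ^ (1 - lam) * piDens m x ^ lam
    / ∫ y, stdGauss y ^ (1 - lam) * piDens m y ^ lam


/-- A smooth trapezoid with slope bounded by one. -/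
lemma exists_trapezoid (c r : ℝ) (hr : 0 < r) (hc : r < c) :
    ∃ (f : ℝ → ℝ) (A : ℝ), ContDiff ℝ (⊤ : ℕ∞) f ∧ HasCompactSupport f ∧ r ≤ A ∧
      (∀ x, |x| ≤ c - r → f x = A) ∧ (∀ x, c + r ≤ |x| → f x = 0) ∧
      (∀ x, |deriv f x| ≤ 1) ∧ (∀ x, |x| ≤ c - r → deriv f x = 0) ∧
      (∀ x, c + r ≤ |x| → deriv f x = 0) := by
  let φ : ContDiffBump (0 : ℝ) := ⟨r / 2, r, by linarith, by linarith⟩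
  have hφ0 : ∀ x : ℝ, r ≤ |x| → φ x = 0 := by
    intro x hx
    apply φ.zero_of_le_dist
    simpa [φ] using hx
  have hφ1 : ∀ x : ℝ, |x| ≤ r / 2 → φ x = 1 := by
    intro x hx
    apply φ.one_of_mem_closedBall
    simpa [φ] using hx
  have hcont : Continuous (fun x => φ x) := φ.continuous
  have hint : ∀ a b, IntervalIntegrable (fun x => φ x) volume a b :=
    fun a b => hcont.intervalIntegrable a b
  let F : ℝ → ℝ := fun x => ∫ y in (-r)..x, φ y
  have hFd : ∀ x, HasDerivAt F (φ x) x := fun x =>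
    intervalIntegral.integral_hasDerivAt_right (hint _ _)
      (hcont.stronglyMeasurableAtFilter _ _) hcont.continuousAt
  have hF0 : ∀ x, x ≤ -r → F x = 0 := by
    intro x hx
    have : F x = ∫ y in (-r)..x, (0:ℝ) := by
      apply intervalIntegral.integral_congr
      intro y hy
      rw [Set.uIcc_of_ge hx] at hy
      exact hφ0 y (by rw [le_abs]; right; linarith [hy.2])
    simpa using this
  have hFA : ∀ x, r ≤ x → F x = F r := by
    intro x hx
    have h1 : F x = F r + ∫ y in r..x, φ y :=
      (intervalIntegral.integral_add_adjacent_intervals (hint _ _) (hint _ _)).symm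
    have : (∫ y in r..x, φ y) = ∫ y in r..x, (0:ℝ) := by
      apply intervalIntegral.integral_congr
      intro y hy
      rw [Set.uIcc_of_le hx] at hy
      exact hφ0 y (by rw [le_abs]; left; linarith [hy.1])
    rw [h1, this]; simp
  have hA : r ≤ F r := by
    have h2 : (∫ y in (-(r/2))..(r/2), φ y) = ∫ y in (-(r/2))..(r/2), (1:ℝ) := by
      apply intervalIntegral.integral_congr
      intro y hy
      rw [Set.uIcc_of_le (by linarith)] at hy
      exact hφ1 y (abs_le.2 ⟨hy.1, hy.2⟩)
    have h3 : (∫ y in (-(r/2))..(r/2), φ y) ≤ ∫ y in (-r)..r, φ y := by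
      apply intervalIntegral.integral_mono_interval (by linarith) (by linarith) (by linarith)
      · exact Filter.Eventually.of_forall (fun y => φ.nonneg)
      · exact hint _ _
    rw [h2] at h3
    simp at h3
    show r ≤ ∫ y in (-r)..r, φ y
    linarith
  let f : ℝ → ℝ := fun x => F (x + c) - F (x - c)
  have hfd : ∀ x, HasDerivAt f (φ (x + c) - φ (x - c)) x := fun x =>
    ((hFd (x + c)).comp_add_const x c).sub ((hFd (x - c)).comp_sub_const x c)
  have hfd' : deriv f = fun x => φ (x + c) - φ (x - c) := funext fun x => (hfd x).deriv
  have hf0 : ∀ x, c + r ≤ |x| → f x = 0 := by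
    intro x hx
    rcases le_abs.1 hx with h | h
    · show F (x + c) - F (x - c) = 0
      rw [hFA (x + c) (by linarith), hFA (x - c) (by linarith), sub_self]
    · show F (x + c) - F (x - c) = 0
      rw [hF0 (x + c) (by linarith), hF0 (x - c) (by linarith), sub_self]
  refine ⟨f, F r, ?_, ?_, hA, ?_, hf0, ?_, ?_, ?_⟩
  · rw [contDiff_infty_iff_deriv]
    refine ⟨fun x => (hfd x).differentiableAt, ?_⟩
    rw [hfd']
    exact (φ.contDiff.comp (contDiff_id.add contDiff_const)).sub
      (φ.contDiff.comp (contDiff_id.sub contDiff_const))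
  · apply HasCompactSupport.of_support_subset_isCompact (isCompact_Icc (a := -(c+r)) (b := c+r))
    intro x hx
    by_contra h
    apply hx
    apply hf0
    by_contra h'
    push Not at h'
    have := abs_lt.1 h'
    exact h ⟨this.1.le, this.2.le⟩
  · intro x hx
    have := abs_le.1 hx
    show F (x + c) - F (x - c) = F r
    rw [hFA (x + c) (by linarith), hF0 (x - c) (by linarith), sub_zero]
  · intro x
    rw [hfd']
    have h1 := φ.nonneg (x := x + c)
    have h2 := φ.nonneg (x := x - c)
    have h3 := φ.le_one (x := x + c)
    have h4 := φ.le_one (x := x - c)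
    rw [abs_le]; constructor <;> simp only <;> linarith
  · intro x hx
    have := abs_le.1 hx
    rw [hfd']
    show φ (x + c) - φ (x - c) = 0
    rw [hφ0 (x + c) (by rw [le_abs]; left; linarith), hφ0 (x - c) (by rw [le_abs]; right; linarith),
      sub_self]
  · intro x hx
    rw [hfd']
    show φ (x + c) - φ (x - c) = 0
    rw [hφ0 (x + c), hφ0 (x - c), sub_self]
    · rcases le_abs.1 hx with h | h <;> rw [le_abs]
      · left; linarith
      · right; linarith
    · rcases le_abs.1 hx with h | h <;> rw [le_abs]
      · left; linarith
      · right; linarith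

/-- Cauchy-Schwarz on a set of positive weight. -/
lemma weighted_cs (w f : ℝ → ℝ) (B : Set ℝ) (hB : MeasurableSet B) (hw : ∀ x, 0 < w x)
    (iw : Integrable w) (if1 : Integrable fun x => f x * w x)
    (if2 : Integrable fun x => f x ^ 2 * w x) (h0 : ∀ x, x ∉ B → f x = 0)
    (hpos : 0 < ∫ x in B, w x) :
    (∫ x, f x * w x) ^ 2 ≤ (∫ x, f x ^ 2 * w x) * ∫ x in B, w x := by
  have e1 : ∫ x in B, f x * w x = ∫ x, f x * w x :=
    setIntegral_eq_integral_of_forall_compl_eq_zero (fun x hx => by rw [h0 x hx, zero_mul])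
  have e2 : ∫ x in B, f x ^ 2 * w x = ∫ x, f x ^ 2 * w x :=
    setIntegral_eq_integral_of_forall_compl_eq_zero (fun x hx => by rw [h0 x hx]; simp)
  set W := ∫ x in B, w x
  set J := ∫ x, f x * w x
  set S := ∫ x, f x ^ 2 * w x
  have key : 0 ≤ ∫ x in B, (W ^ 2 * (f x ^ 2 * w x) - 2 * W * J * (f x * w x) + J ^ 2 * w x) := by
    apply integral_nonneg
    intro x
    have : W ^ 2 * (f x ^ 2 * w x) - 2 * W * J * (f x * w x) + J ^ 2 * w x
      = (W * f x - J) ^ 2 * w x := by ring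
    simp only [this]
    exact mul_nonneg (sq_nonneg _) (hw x).le
  rw [integral_add, integral_sub, integral_const_mul, integral_const_mul, integral_const_mul,
    e1, e2] at key
  · have h2 : 0 ≤ W * (S * W - J ^ 2) := by
      have : W ^ 2 * S - 2 * W * J * J + J ^ 2 * W = W * (S * W - J ^ 2) := by ring
      change 0 ≤ W ^ 2 * S - 2 * W * J * J + J ^ 2 * W at key
      rwa [this] at key
    have := nonneg_of_mul_nonneg_right h2 hpos
    linarith
  · exact (if2.integrableOn).const_mul _
  · exact (if1.integrableOn).const_mul _
  · exact ((if2.integrableOn).const_mul _).sub ((if1.integrableOn).const_mul _)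
  · exact (iw.integrableOn).const_mul _

/-- The unnormalised tempered density. -/
noncomputable def wDens (m lam x : ℝ) : ℝ := stdGauss x ^ (1 - lam) * piDens m x ^ lam

/-- The reference height of the tempered density near the origin. -/
noncomputable def refH (m lam : ℝ) : ℝ :=
  (Real.exp (-m ^ 2 / 4) / (3 * m + Real.sqrt (2 * Real.pi))) ^ lam
    / Real.sqrt (2 * Real.pi) ^ (1 - lam)

lemma sqrt_two_pi_ge : (2 : ℝ) ≤ Real.sqrt (2 * Real.pi) := by
  apply Real.le_sqrt_of_sq_le
  nlinarith [Real.pi_gt_three]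

lemma stdGauss_pos (x : ℝ) : 0 < stdGauss x := by
  have := sqrt_two_pi_ge
  unfold stdGauss; positivity

lemma gaussAt_pos (m x : ℝ) : 0 < gaussAt m x := by
  have := sqrt_two_pi_ge
  unfold gaussAt; positivity

lemma smUnif_pos (m x : ℝ) (hm : 10 ≤ m) : 0 < smUnif m x := by
  have := sqrt_two_pi_ge
  unfold smUnif; positivity

lemma E_lt (m : ℝ) (hm : 10 ≤ m) : Real.exp (-m ^ 2 / 4) ≤ 1 / 2 := by
  have h1 : (26 : ℝ) ≤ Real.exp (m ^ 2 / 4) := by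
    have := Real.add_one_le_exp (m ^ 2 / 4)
    nlinarith
  rw [show -m ^ 2 / 4 = -(m ^ 2 / 4) by ring, Real.exp_neg, inv_le_comm₀ (by positivity) (by norm_num)]
  linarith

lemma piDens_pos (m x : ℝ) (hm : 10 ≤ m) : 0 < piDens m x := by
  have h1 := E_lt m hm
  have h2 := gaussAt_pos m x
  have h3 := smUnif_pos m x hm
  have h4 := Real.exp_pos (-m ^ 2 / 4)
  unfold piDens
  have : 0 < 1 - Real.exp (-m ^ 2 / 4) := by linarith
  positivity

lemma wDens_pos (m lam x : ℝ) (hm : 10 ≤ m) : 0 < wDens m lam x :=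
  mul_pos (Real.rpow_pos_of_pos (stdGauss_pos x) _) (Real.rpow_pos_of_pos (piDens_pos m x hm) _)

lemma refH_pos (m lam : ℝ) (hm : 10 ≤ m) : 0 < refH m lam := by
  have := sqrt_two_pi_ge
  unfold refH; positivity

lemma stdGauss_cont : Continuous stdGauss := by
  unfold stdGauss; fun_prop

lemma piDens_cont (m : ℝ) : Continuous (piDens m) := by
  unfold piDens gaussAt smUnif
  have := Metric.continuous_infDist_pt (Set.Icc (-m) (2 * m))
  fun_prop

lemma wDens_cont (m lam : ℝ) (hm : 10 ≤ m) : Continuous (wDens m lam) := by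
  unfold wDens
  exact (stdGauss_cont.rpow_const (fun x => Or.inl (stdGauss_pos x).ne')).mul
    ((piDens_cont m).rpow_const (fun x => Or.inl (piDens_pos m x hm).ne'))

lemma stdGauss_int : Integrable stdGauss := by
  have h := integrable_exp_neg_mul_sq (b := 1 / 2) (by norm_num)
  unfold stdGauss
  apply Integrable.div_const
  convert h using 3
  ring

lemma gaussAt_int (m : ℝ) : Integrable (gaussAt m) :=
  stdGauss_int.comp_sub_right m

lemma smUnif_int (m : ℝ) (hm : 10 ≤ m) : Integrable (smUnif m) := by
  have hs := sqrt_two_pi_ge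
  have h := integrable_exp_neg_mul_sq (b := 1 / 4) (by norm_num)
  have h' := (h.const_mul (Real.exp (2 * m ^ 2))).div_const (3 * m + Real.sqrt (2 * Real.pi))
  refine h'.mono' ?_ (Filter.Eventually.of_forall fun x => ?_)
  · have := Metric.continuous_infDist_pt (Set.Icc (-m) (2 * m))
    have h2 : Continuous (smUnif m) := by unfold smUnif; fun_prop
    exact h2.aestronglyMeasurable
  · rw [Real.norm_of_nonneg (smUnif_pos m x hm).le]
    unfold smUnif
    rw [← Real.exp_add]
    gcongr
    have hne : (Set.Icc (-m) (2 * m)).Nonempty := ⟨0, by constructor <;> linarith⟩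
    have hd : |x| - 2 * m ≤ Metric.infDist x (Set.Icc (-m) (2 * m)) := by
      rw [Metric.le_infDist hne]
      intro y hy
      rw [Real.dist_eq]
      have h1 : |y| ≤ 2 * m := abs_le.2 ⟨by linarith [hy.1], hy.2⟩
      have h2 := abs_sub_abs_le_abs_sub x y
      linarith
    have hd0 := Metric.infDist_nonneg (x := x) (s := Set.Icc (-m) (2 * m))
    set d := Metric.infDist x (Set.Icc (-m) (2 * m))
    have : |x| ^ 2 ≤ (d + 2 * m) ^ 2 := by
      apply pow_le_pow_left₀ (abs_nonneg x); linarith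
    rw [sq_abs] at this
    nlinarith [sq_nonneg (d - 2 * m)]

lemma piDens_int (m : ℝ) (hm : 10 ≤ m) : Integrable (piDens m) :=
  ((gaussAt_int m).const_mul _).add ((smUnif_int m hm).const_mul _)

lemma wDens_int (m lam : ℝ) (hm : 10 ≤ m) (h0 : 0 ≤ lam) (h1 : lam ≤ 1) :
    Integrable (wDens m lam) := by
  refine ((stdGauss_int.const_mul (1 - lam)).add ((piDens_int m hm).const_mul lam)).mono'
    (wDens_cont m lam hm).aestronglyMeasurable (Filter.Eventually.of_forall fun x => ?_)
  rw [Real.norm_of_nonneg (wDens_pos m lam x hm).le]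
  exact Real.geom_mean_le_arith_mean2_weighted (by linarith) h0 (stdGauss_pos x).le
    (piDens_pos m x hm).le (by ring)

lemma stdGauss_rpow (x t : ℝ) :
    stdGauss x ^ t = Real.exp (-t * x ^ 2 / 2) / Real.sqrt (2 * Real.pi) ^ t := by
  unfold stdGauss
  rw [Real.div_rpow (Real.exp_pos _).le (Real.sqrt_nonneg _), ← Real.exp_mul]
  congr 2; ring

lemma smUnif_eq (m x : ℝ) (h : x ∈ Set.Icc (-m) (2 * m)) :
    smUnif m x = 1 / (3 * m + Real.sqrt (2 * Real.pi)) := by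
  unfold smUnif
  rw [Metric.infDist_zero_of_mem h]; simp

lemma gauss_le (m x : ℝ) (hm : 10 ≤ m) (hx : |x| ≤ m / 5) :
    gaussAt m x ≤ Real.exp (-m ^ 2 / 4) / (3 * m + Real.sqrt (2 * Real.pi)) := by
  have hs := sqrt_two_pi_ge
  unfold gaussAt
  set s := Real.sqrt (2 * Real.pi)
  have h1 : -(x - m) ^ 2 / 2 ≤ -m ^ 2 / 4 + -(7 / 100 * m ^ 2) := by
    have := (abs_le.1 hx).2
    nlinarith
  have h2 : 1 + 3 / 2 * m ≤ Real.exp (7 / 100 * m ^ 2) := by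
    have := Real.quadratic_le_exp_of_nonneg (x := 7 / 100 * m ^ 2) (by positivity)
    have h3 : m * 10 ≤ m ^ 2 := by nlinarith
    nlinarith
  rw [div_le_div_iff₀ (by positivity) (by positivity)]
  calc Real.exp (-(x - m) ^ 2 / 2) * (3 * m + s)
      ≤ Real.exp (-m ^ 2 / 4 + -(7 / 100 * m ^ 2)) * (3 * m + s) := by gcongr
    _ ≤ Real.exp (-m ^ 2 / 4 + -(7 / 100 * m ^ 2)) * (s * Real.exp (7 / 100 * m ^ 2)) := by
        gcongr
        have : s * (1 + 3 / 2 * m) ≤ s * Real.exp (7 / 100 * m ^ 2) := by gcongr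
        nlinarith
    _ = Real.exp (-m ^ 2 / 4) * s := by
        rw [Real.exp_add, Real.exp_neg]
        field_simp

/-- Upper bound near the origin. -/
lemma wDens_le (m lam x : ℝ) (hm : 10 ≤ m) (h0 : 1 / 2 ≤ lam) (h1 : lam ≤ 1)
    (hx : |x| ≤ m / 5) :
    wDens m lam x ≤ 2 * refH m lam * Real.exp (-(1 - lam) * x ^ 2 / 2) := by
  have hs := sqrt_two_pi_ge
  have hg := gauss_le m x hm hx
  have hx' := abs_le.1 hx
  have hu := smUnif_eq m x ⟨by linarith, by linarith⟩
  have hgp := gaussAt_pos m x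
  have hE := Real.exp_pos (-m ^ 2 / 4)
  unfold wDens
  rw [stdGauss_rpow]
  unfold refH
  set κ := Real.exp (-m ^ 2 / 4) / (3 * m + Real.sqrt (2 * Real.pi)) with hκ
  have hκ0 : 0 < κ := by positivity
  have hp : piDens m x ≤ 2 * κ := by
    unfold piDens
    rw [hu, mul_one_div, ← hκ]
    nlinarith
  have h2 : piDens m x ^ lam ≤ 2 * κ ^ lam := by
    calc piDens m x ^ lam ≤ (2 * κ) ^ lam :=
          Real.rpow_le_rpow (piDens_pos m x hm).le hp (by linarith)
      _ = 2 ^ lam * κ ^ lam := Real.mul_rpow (by norm_num) hκ0.le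
      _ ≤ 2 * κ ^ lam := by
          gcongr
          calc (2:ℝ) ^ lam ≤ 2 ^ (1:ℝ) := Real.rpow_le_rpow_of_exponent_le (by norm_num) h1
            _ = 2 := by norm_num
  calc _ ≤ Real.exp (-(1 - lam) * x ^ 2 / 2) / Real.sqrt (2 * Real.pi) ^ (1 - lam)
        * (2 * κ ^ lam) := by gcongr
    _ = _ := by ring

/-- Lower bound near the origin. -/
lemma wDens_ge_zero (m lam x : ℝ) (hm : 10 ≤ m) (h0 : 1 / 2 ≤ lam) (h1 : lam ≤ 1)
    (hx : |x| ≤ 1) : refH m lam / 2 ≤ wDens m lam x := by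
  have hs := sqrt_two_pi_ge
  have hx' := abs_le.1 hx
  have hu := smUnif_eq m x ⟨by linarith, by linarith⟩
  have hgp := gaussAt_pos m x
  have hE := E_lt m hm
  unfold wDens
  rw [stdGauss_rpow]
  unfold refH
  set κ := Real.exp (-m ^ 2 / 4) / (3 * m + Real.sqrt (2 * Real.pi)) with hκ
  have hκ0 : 0 < κ := by positivity
  have hp : κ ≤ piDens m x := by
    unfold piDens
    rw [hu, mul_one_div, ← hκ]
    nlinarith
  have h2 : κ ^ lam ≤ piDens m x ^ lam := Real.rpow_le_rpow hκ0.le hp (by linarith)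
  have h3 : 1 / 2 ≤ Real.exp (-(1 - lam) * x ^ 2 / 2) := by
    have := Real.add_one_le_exp (-(1 - lam) * x ^ 2 / 2)
    have h5 : x ^ 2 ≤ 1 := by nlinarith
    nlinarith
  calc _ = (1 / 2) / Real.sqrt (2 * Real.pi) ^ (1 - lam) * κ ^ lam := by ring
    _ ≤ _ := by gcongr

/-- Lower bound near the main mode. -/
lemma wDens_ge_mode (m lam x : ℝ) (hm : 10 ≤ m) (h0 : 1 / 2 ≤ lam) (h1 : lam ≤ 1)
    (hx : lam * m ≤ x) (hx2 : x ≤ lam * m + 1) : refH m lam / 2 ≤ wDens m lam x := by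
  have hs := sqrt_two_pi_ge
  have hE := E_lt m hm
  have hE0 := Real.exp_pos (-m ^ 2 / 4)
  have hup := smUnif_pos m x hm
  unfold wDens
  rw [stdGauss_rpow]
  unfold refH
  set s := Real.sqrt (2 * Real.pi) with hsdef
  have hq : Real.exp (-(x - m) ^ 2 / 2) / (3 * m + s) ≤ piDens m x := by
    have h2 : Real.exp (-(x - m) ^ 2 / 2) / (3 * m + s) ≤ 1 / 2 * gaussAt m x := by
      unfold gaussAt
      rw [← hsdef, ← mul_div_assoc, div_le_div_iff₀ (by positivity) (by positivity)]
      have h4 : s ≤ 3 * m := by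
        rw [hsdef, Real.sqrt_le_left (by linarith)]
        nlinarith [Real.pi_lt_four]
      nlinarith [Real.exp_pos (-(x - m) ^ 2 / 2)]
    unfold piDens
    have h3 := gaussAt_pos m x
    nlinarith [mul_pos hE0 hup]
  have h2 : (Real.exp (-(x - m) ^ 2 / 2) / (3 * m + s)) ^ lam ≤ piDens m x ^ lam :=
    Real.rpow_le_rpow (by positivity) hq (by linarith)
  rw [Real.div_rpow (Real.exp_pos _).le (by positivity), ← Real.exp_mul] at h2
  rw [Real.div_rpow (Real.exp_pos _).le (by positivity), ← Real.exp_mul]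
  have h3 : Real.exp (-m ^ 2 / 4 * lam) * (1 / 2) ≤
      Real.exp (-(1 - lam) * x ^ 2 / 2) * Real.exp (-(x - m) ^ 2 / 2 * lam) := by
    have h5 : (1 / 2 : ℝ) ≤ Real.exp (-1 / 2) := by
      have := Real.add_one_le_exp (-1 / 2 : ℝ)
      linarith
    calc Real.exp (-m ^ 2 / 4 * lam) * (1 / 2)
        ≤ Real.exp (-m ^ 2 / 4 * lam) * Real.exp (-1 / 2) := by gcongr
      _ ≤ _ := by
        rw [← Real.exp_add, ← Real.exp_add]
        apply Real.exp_le_exp.2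
        obtain ⟨y, rfl⟩ : ∃ y, x = lam * m + y := ⟨x - lam * m, by ring⟩
        have hy : y ^ 2 ≤ 1 := by nlinarith
        have : 0 ≤ lam * (lam - 1 / 2) * m ^ 2 := by
          have : 0 ≤ lam - 1 / 2 := by linarith
          positivity
        nlinarith
  calc _ = Real.exp (-m ^ 2 / 4 * lam) * (1 / 2) / (s ^ (1 - lam) * (3 * m + s) ^ lam) := by
        field_simp
    _ ≤ Real.exp (-(1 - lam) * x ^ 2 / 2) * Real.exp (-(x - m) ^ 2 / 2 * lam) /
        (s ^ (1 - lam) * (3 * m + s) ^ lam) := by gcongr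
    _ = Real.exp (-(1 - lam) * x ^ 2 / 2) / s ^ (1 - lam) *
        (Real.exp (-(x - m) ^ 2 / 2 * lam) / (3 * m + s) ^ lam) := by field_simp
    _ ≤ _ := by gcongr

lemma setInt_lower (w : ℝ → ℝ) (iw : Integrable w) (a b k : ℝ) (hab : a ≤ b)
    (h : ∀ x ∈ Set.Icc a b, k ≤ w x) : (b - a) * k ≤ ∫ x in Set.Icc a b, w x := by
  have := setIntegral_mono_on (μ := volume) (f := fun _ => k) (g := w)
    (s := Set.Icc a b) (by simp) iw.integrableOn measurableSet_Icc h
  simpa [hab] using this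

lemma setInt_upper (w : ℝ → ℝ) (iw : Integrable w) (a b k : ℝ) (hab : a ≤ b)
    (h : ∀ x ∈ Set.Icc a b, w x ≤ k) : ∫ x in Set.Icc a b, w x ≤ (b - a) * k := by
  have := setIntegral_mono_on (μ := volume) (f := w) (g := fun _ => k)
    (s := Set.Icc a b) iw.integrableOn (by simp) measurableSet_Icc h
  simpa [hab] using this

lemma final_arith (m lam C Z WB Wo S J D A G : ℝ) (hm : 10 ≤ m) (h1 : lam ≤ 1) (hC : 0 ≤ C)
    (Gp : 0 < G) (hA : m / 40 ≤ A) (hWBpos : 0 < WB) (hWB1 : WB ≤ m * G) (hWo : G / 2 ≤ Wo)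
    (hZ : Z = WB + Wo) (hS : A ^ 2 * G ≤ S) (hcs : J ^ 2 ≤ S * WB) (hD0 : 0 ≤ D)
    (hD : D ≤ 2 * m / 5 * (2 * G * Real.exp (-(1 - lam) * (3 * m / 20) ^ 2 / 2)))
    (hp : S / Z - (J / Z) ^ 2 ≤ C * (D / Z)) :
    1 / (4 * 10 ^ 4 * m) * Real.exp (m ^ 2 * (1 - lam) / 100) - m ^ 2 ≤ C := by
  set K := 2 * G * Real.exp (-(1 - lam) * (3 * m / 20) ^ 2 / 2) with hK
  have Zp : 0 < Z := by rw [hZ]; linarith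
  have hWop : 0 < Wo := by linarith
  have Sp : 0 ≤ S := le_trans (by positivity) hS
  have hp2 : S * Z - J ^ 2 ≤ C * D * Z := by
    have e : S * Z - J ^ 2 = (S / Z - (J / Z) ^ 2) * Z ^ 2 := by field_simp
    have e2 : C * D * Z = C * (D / Z) * Z ^ 2 := by field_simp
    rw [e, e2]
    have : 0 ≤ Z ^ 2 := by positivity
    exact mul_le_mul_of_nonneg_right hp this
  have hp3 : S * Wo ≤ C * D * Z := by
    have : S * Z = S * WB + S * Wo := by rw [hZ]; ring
    linarith
  have hZ2 : Z ≤ (1 + 2 * m) * Wo := by rw [hZ]; nlinarith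
  have hp4 : S ≤ C * D * (1 + 2 * m) := by
    have : S * Wo ≤ (C * D * (1 + 2 * m)) * Wo := by
      calc S * Wo ≤ C * D * Z := hp3
        _ ≤ C * D * ((1 + 2 * m) * Wo) := by gcongr
        _ = _ := by ring
    exact le_of_mul_le_mul_right this hWop
  have hm0 : 0 < m := by linarith
  have hp5 : (m / 40) ^ 2 * G ≤ C * (2 * m / 5 * K) * (1 + 2 * m) := by
    calc (m / 40) ^ 2 * G ≤ A ^ 2 * G := by gcongr
      _ ≤ S := hS
      _ ≤ C * D * (1 + 2 * m) := hp4
      _ ≤ _ := by gcongr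
  -- conclude
  have hexp : Real.exp (-(1 - lam) * (3 * m / 20) ^ 2 / 2) ≤
      Real.exp (-(m ^ 2 * (1 - lam) / 100)) := by
    apply Real.exp_le_exp.2
    nlinarith [mul_nonneg (sub_nonneg.2 h1) (sq_nonneg m)]
  set T := Real.exp (m ^ 2 * (1 - lam) / 100) with hT
  have Tp : 0 < T := Real.exp_pos _
  rw [Real.exp_neg, ← hT] at hexp
  have hp6 : (m / 40) ^ 2 * G ≤ C * (2 * m / 5 * (2 * G * T⁻¹)) * (1 + 2 * m) := by
    refine hp5.trans ?_
    rw [hK]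
    gcongr
  have hp7 : m * T ≤ 1280 * C * (1 + 2 * m) := by
    have : (m / 40) ^ 2 * G * (T * 1600 / (m * G)) ≤
      C * (2 * m / 5 * (2 * G * T⁻¹)) * (1 + 2 * m) * (T * 1600 / (m * G)) := by gcongr
    have e1 : (m / 40) ^ 2 * G * (T * 1600 / (m * G)) = m * T := by field_simp; norm_num
    have e2 : C * (2 * m / 5 * (2 * G * T⁻¹)) * (1 + 2 * m) * (T * 1600 / (m * G))
      = 1280 * C * (1 + 2 * m) := by field_simp; ring
    rw [e1, e2] at this
    exact this
  have hp8 : T ≤ 3840 * C := by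
    have : m * T ≤ m * (3840 * C) := by nlinarith
    exact le_of_mul_le_mul_left this hm0
  have hp9 : 1 / (4 * 10 ^ 4 * m) * T ≤ C := by
    rw [one_div, inv_mul_le_iff₀ (by positivity)]
    nlinarith
  nlinarith [sq_nonneg m]

/-- For m ≥ 10, ν = N(0,1) and π = (1−e^{−m²/4})N(m,1) + e^{−m²/4}u_m,
every Poincaré constant C of the geometric tempering μ_λ with λ ∈ [1/2, 1] satisfies
C ≥ (1/(4·10⁴m)) e^{m²(1−λ)/100} − m². -/
theorem geometric_tempering_poincare_lower_bound
    (m lam : ℝ) (hm : 10 ≤ m) (hlam : lam ∈ Set.Icc (1 / 2 : ℝ) 1)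
    (C : ℝ) (hC : 0 ≤ C)
    (hpoinc : ∀ f : ℝ → ℝ, ContDiff ℝ (⊤ : ℕ∞) f → HasCompactSupport f →
      (∫ x, (f x) ^ 2 * muDens m lam x) - (∫ x, f x * muDens m lam x) ^ 2
        ≤ C * ∫ x, (deriv f x) ^ 2 * muDens m lam x) :
    1 / (4 * 10 ^ 4 * m) * Real.exp (m ^ 2 * (1 - lam) / 100) - m ^ 2 ≤ C := by
  obtain ⟨h0, h1⟩ := hlam
  obtain ⟨f, A, fC, fS, hA, fA, f0, fd1, fda, fdb⟩ :=
    exists_trapezoid (7 * m / 40) (m / 40) (by linarith) (by linarith)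
  rw [show 7 * m / 40 - m / 40 = 3 * m / 20 by ring] at fA fda
  rw [show 7 * m / 40 + m / 40 = m / 5 by ring] at f0 fdb
  have hp := hpoinc f fC fS
  have iw := wDens_int m lam hm (by linarith) h1
  have cw := wDens_cont m lam hm
  have wp := fun x => wDens_pos m lam x hm
  have Gp := refH_pos m lam hm
  have hmu : ∀ x, muDens m lam x = wDens m lam x / ∫ y, wDens m lam y := fun x => rfl
  set w := wDens m lam with hw
  set G := refH m lam with hG
  have cf := fC.continuous
  have cf' : Continuous (deriv f) := fC.continuous_deriv (by simp)
  have fS' : HasCompactSupport (deriv f) := fS.deriv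
  have if1 : Integrable fun x => f x * w x :=
    (cf.mul cw).integrable_of_hasCompactSupport fS.mul_right
  have if2 : Integrable fun x => f x ^ 2 * w x :=
    ((cf.pow 2).mul cw).integrable_of_hasCompactSupport
      (HasCompactSupport.mul_right (by
        have := fS.mul_right (f' := f)
        convert this using 1; ext x; simp [sq]))
  set B := Set.Icc (-(m / 5)) (m / 5) with hB
  have hWB1 : ∫ x in B, w x ≤ m * G := by
    have := setInt_upper w iw (-(m / 5)) (m / 5) (2 * G) (by linarith) (fun x hx => by
      have hh := wDens_le m lam x hm h0 h1 (abs_le.2 hx)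
      refine hh.trans ?_
      have : Real.exp (-(1 - lam) * x ^ 2 / 2) ≤ 1 := by
        rw [Real.exp_le_one_iff]
        nlinarith [mul_nonneg (sub_nonneg.2 h1) (sq_nonneg x)]
      nlinarith)
    refine this.trans ?_
    nlinarith
  have hcore : G ≤ ∫ x in Set.Icc (-1 : ℝ) 1, w x := by
    have := setInt_lower w iw (-1) 1 (G / 2) (by norm_num) (fun x hx =>
      wDens_ge_zero m lam x hm h0 h1 (abs_le.2 hx))
    linarith
  have hWBpos : 0 < ∫ x in B, w x := by
    refine lt_of_lt_of_le Gp (hcore.trans ?_)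
    apply setIntegral_mono_set iw.integrableOn (Filter.Eventually.of_forall fun x => (wp x).le)
    exact (Set.Icc_subset_Icc (by linarith) (by linarith)).eventuallyLE
  have hBm : MeasurableSet B := measurableSet_Icc
  have hcs := weighted_cs w f B hBm wp iw if1 if2 (fun x hx => f0 x (by
    by_contra h
    push Not at h
    exact hx ⟨(abs_lt.1 h).1.le, (abs_lt.1 h).2.le⟩)) hWBpos
  have hZ : ∫ x, w x = (∫ x in B, w x) + ∫ x in Bᶜ, w x := (integral_add_compl hBm iw).symm
  have hWo : G / 2 ≤ ∫ x in Bᶜ, w x := by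
    have h3 := setInt_lower w iw (lam * m) (lam * m + 1) (G / 2) (by linarith) (fun x hx =>
      wDens_ge_mode m lam x hm h0 h1 hx.1 hx.2)
    have h4 : ∫ x in Set.Icc (lam * m) (lam * m + 1), w x ≤ ∫ x in Bᶜ, w x := by
      apply setIntegral_mono_set iw.integrableOn (Filter.Eventually.of_forall fun x => (wp x).le)
      apply LE.le.eventuallyLE
      intro x hx hxB
      have := hx.1
      have := hxB.2
      nlinarith
    linarith
  have hS : A ^ 2 * G ≤ ∫ x, f x ^ 2 * w x := by
    calc A ^ 2 * G ≤ A ^ 2 * ∫ x in Set.Icc (-1 : ℝ) 1, w x := by gcongr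
      _ = ∫ x in Set.Icc (-1 : ℝ) 1, A ^ 2 * w x := (integral_const_mul _ _).symm
      _ = ∫ x in Set.Icc (-1 : ℝ) 1, f x ^ 2 * w x := by
          apply setIntegral_congr_fun measurableSet_Icc
          intro x hx
          simp only
          rw [fA x (by have := abs_le.2 hx; linarith)]
      _ ≤ ∫ x, f x ^ 2 * w x :=
          setIntegral_le_integral if2 (Filter.Eventually.of_forall fun x =>
            mul_nonneg (sq_nonneg _) (wp x).le)
  set K := 2 * G * Real.exp (-(1 - lam) * (3 * m / 20) ^ 2 / 2) with hK
  have Kp : 0 < K := by positivity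
  have hD : ∫ x, deriv f x ^ 2 * w x ≤ 2 * m / 5 * K := by
    have h5 : ∫ x, deriv f x ^ 2 * w x ≤ ∫ x, B.indicator (fun _ => K) x := by
      apply integral_mono_of_nonneg
      · exact Filter.Eventually.of_forall fun x => mul_nonneg (sq_nonneg _) (wp x).le
      · rw [integrable_indicator_iff hBm]; simp [hB]
      · refine Filter.Eventually.of_forall fun x => ?_
        simp only
        by_cases hx : x ∈ B
        · rw [Set.indicator_of_mem hx]
          rcases le_total |x| (3 * m / 20) with h | h
          · rw [fda x h]; simpa using Kp.le
          · have h6 := wDens_le m lam x hm h0 h1 (abs_le.2 hx)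
            have h7 : deriv f x ^ 2 ≤ 1 := by
              rw [← sq_abs]; exact pow_le_one₀ (abs_nonneg _) (fd1 x)
            have h8 : (3 * m / 20) ^ 2 ≤ x ^ 2 := by
              rw [← sq_abs x]; gcongr
            calc deriv f x ^ 2 * w x ≤ 1 * w x := by gcongr; exact (wp x).le
              _ = w x := one_mul _
              _ ≤ _ := h6
              _ ≤ K := by
                rw [hK]
                refine mul_le_mul_of_nonneg_left (Real.exp_le_exp.2 ?_) (by positivity)
                nlinarith [mul_le_mul_of_nonneg_left h8 (sub_nonneg.2 h1)]
        · rw [Set.indicator_of_notMem hx, fdb x (by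
            by_contra h
            push Not at h
            exact hx ⟨(abs_lt.1 h).1.le, (abs_lt.1 h).2.le⟩)]
          simp
    rw [integral_indicator hBm] at h5
    refine h5.trans (le_of_eq ?_)
    rw [setIntegral_const, hB, Real.volume_real_Icc_of_le (by linarith), smul_eq_mul]
    ring
  have hD0 : 0 ≤ ∫ x, deriv f x ^ 2 * w x :=
    integral_nonneg fun x => mul_nonneg (sq_nonneg _) (wp x).le
  simp only [hmu, ← mul_div_assoc, integral_div] at hp
  try rw [mul_div_assoc] at hp
  exact final_arith m lam C _ _ _ _ _ _ A G hm h1 hC Gp hA hWBpos hWB1 hWo hZ hS hcs hD0 hD hp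
end
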